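/- Let n be an integer with n → ∞ and let q be a prime power (bounded or not). Let X be the random subset of F_q^n in which each point is included independently with probability θ, and let m < n be a bounded positive integer. Then the event Γ that X contains an entire m-flat of F_q^n has threshold function q^{−n(m+1)q^{−m}}. Moreover, if q → ∞, then this threshold is sharp: for every fixed ε > 0, Pr[Γ] → 0 whenever θ ≤ (1−ε)·q^{−n(m+1)q^{−m}} and Pr[Γ] → 1 whenever θ ≥ (1+ε)·q^{−n(m+1)q^{−m}}. -/

import Mathlib

open Filter Asymptotics

noncomputable def prRandomSubset {α : Type*} (U : Finset α) (θ : ℝ)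
    (E : Finset α → Prop) : ℝ :=
  ∑ A ∈ U.powerset,
    @ite ℝ (E A) (Classical.propDecidable _)
      (θ ^ A.card * (1 - θ) ^ (U.card - A.card)) 0

def IsFlat (K : Type*) {V : Type*} [Field K] [AddCommGroup V] [Module K V]
    (m : ℕ) (S : Set V) : Prop :=
  ∃ W : Submodule K V, Module.finrank K W = m ∧ ∃ v : V, S = (v + ·) '' (W : Set V)

section RandomSubset

open scoped Classical

variable {α : Type*} {U : Finset α} {θ : ℝ}

theorem prRandomSubset_eq_sum (U : Finset α) (θ : ℝ) (E : Finset α → Prop) [DecidablePred E] :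
    prRandomSubset U θ E = ∑ A ∈ U.powerset,
      θ ^ A.card * (1 - θ) ^ (U.card - A.card) * (if E A then 1 else 0) := by
  unfold prRandomSubset
  refine Finset.sum_congr rfl fun A _ => ?_
  by_cases h : E A <;> simp [h]

theorem prRandomSubset_weight_nonneg (hθ : 0 ≤ θ) (hθ' : θ ≤ 1) (A : Finset α) :
    0 ≤ θ ^ A.card * (1 - θ) ^ (U.card - A.card) :=
  mul_nonneg (pow_nonneg hθ _) (pow_nonneg (by linarith) _)

theorem sum_prRandomSubset_weight (U : Finset α) (θ : ℝ) :
    ∑ A ∈ U.powerset, θ ^ A.card * (1 - θ) ^ (U.card - A.card) = 1 := by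
  rw [Finset.sum_pow_mul_eq_add_pow]
  simp

theorem prRandomSubset_nonneg (hθ : 0 ≤ θ) (hθ' : θ ≤ 1) (E : Finset α → Prop) :
    0 ≤ prRandomSubset U θ E := by
  rw [prRandomSubset_eq_sum]
  exact Finset.sum_nonneg fun A _ =>
    mul_nonneg (prRandomSubset_weight_nonneg hθ hθ' A) (by positivity)

theorem prRandomSubset_le_one (hθ : 0 ≤ θ) (hθ' : θ ≤ 1) (E : Finset α → Prop) :
    prRandomSubset U θ E ≤ 1 := by
  rw [prRandomSubset_eq_sum]
  refine (Finset.sum_le_sum fun A _ => mul_le_of_le_one_right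
    (prRandomSubset_weight_nonneg hθ hθ' A) ?_).trans (sum_prRandomSubset_weight U θ).le
  split_ifs <;> norm_num

theorem prRandomSubset_superset {S : Finset α} (hS : S ⊆ U) :
    prRandomSubset U θ (fun A => S ⊆ A) = θ ^ S.card := by
  have hIcc : U.powerset.filter (fun A => S ⊆ A) = (U \ S).powerset.image (S ∪ ·) := by
    rw [← Finset.Icc_eq_image_powerset hS]
    ext A
    simp [and_comm]
  rw [prRandomSubset_eq_sum]
  simp only [mul_ite, mul_one, mul_zero]
  rw [← Finset.sum_filter, hIcc, Finset.sum_image]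
  · have : ∀ B ∈ (U \ S).powerset,
        θ ^ (S ∪ B).card * (1 - θ) ^ (U.card - (S ∪ B).card)
          = θ ^ S.card * (θ ^ B.card * (1 - θ) ^ ((U \ S).card - B.card)) := by
      intro B hB
      have hd : Disjoint S B :=
        (Finset.disjoint_sdiff (s := S) (t := U)).mono_right (Finset.mem_powerset.1 hB)
      rw [Finset.card_union_of_disjoint hd, Finset.card_sdiff_of_subset hS, Nat.sub_sub, pow_add,
        mul_assoc]
    rw [Finset.sum_congr rfl this, ← Finset.mul_sum, sum_prRandomSubset_weight, mul_one]
  · intro B hB C hC h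
    have hdB : Disjoint S B :=
      (Finset.disjoint_sdiff (s := S) (t := U)).mono_right (Finset.mem_powerset.1 hB)
    have hdC : Disjoint S C :=
      (Finset.disjoint_sdiff (s := S) (t := U)).mono_right (Finset.mem_powerset.1 hC)
    simpa [Finset.union_sdiff_cancel_left hdB, Finset.union_sdiff_cancel_left hdC]
      using congrArg (· \ S) h

theorem prRandomSubset_le_sum {ι : Type*} (hθ : 0 ≤ θ) (hθ' : θ ≤ 1) (I : Finset ι)
    {E : Finset α → Prop} {P : ι → Finset α → Prop} (h : ∀ A, E A → ∃ i ∈ I, P i A) :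
    prRandomSubset U θ E ≤ ∑ i ∈ I, prRandomSubset U θ (P i) := by
  simp only [prRandomSubset_eq_sum]
  rw [Finset.sum_comm]
  refine Finset.sum_le_sum fun A _ => ?_
  rw [← Finset.mul_sum]
  refine mul_le_mul_of_nonneg_left ?_ (prRandomSubset_weight_nonneg hθ hθ' A)
  by_cases hE : E A
  · obtain ⟨i, hi, hP⟩ := h A hE
    calc (if E A then (1 : ℝ) else 0) = if P i A then 1 else 0 := by simp [hE, hP]
      _ ≤ _ := Finset.single_le_sum (f := fun i => if P i A then (1 : ℝ) else 0)
        (fun _ _ => by positivity) hi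
  · simp only [hE, if_false]
    positivity

/-- The second moment method for the number of members of a uniform family of sets
contained in a random subset. -/
theorem one_sub_prRandomSubset_le {ι : Type*} [Fintype ι] [Nonempty ι] (hθ : 0 < θ) (hθ' : θ ≤ 1)
    {S : ι → Finset α} (hS : ∀ i, S i ⊆ U) {u : ℕ} (hu : ∀ i, (S i).card = u)
    {E : Finset α → Prop} (h : ∀ A i, S i ⊆ A → E A) :
    1 - prRandomSubset U θ E ≤ (∑ i, ∑ j,
      if Disjoint (S i) (S j) then 0 else θ⁻¹ ^ (S i ∩ S j).card) / (Fintype.card ι : ℝ) ^ 2 := by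
  set N : ℝ := (Fintype.card ι : ℝ) with hN
  have hNpos : 0 < N := Nat.cast_pos.2 Fintype.card_pos
  set w : Finset α → ℝ := fun A => θ ^ A.card * (1 - θ) ^ (U.card - A.card) with hw
  have hw0 : ∀ A, 0 ≤ w A := fun A => prRandomSubset_weight_nonneg hθ.le hθ' A
  have hw1 : ∑ A ∈ U.powerset, w A = 1 := sum_prRandomSubset_weight U θ
  set Y : Finset α → ℝ := fun A => ∑ i, if S i ⊆ A then 1 else 0 with hY
  set μ : ℝ := N * θ ^ u with hμ
  have hμpos : 0 < μ := by positivity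
  have hEY : ∑ A ∈ U.powerset, w A * Y A = μ := by
    simp only [hY, Finset.mul_sum]
    rw [Finset.sum_comm]
    have : ∀ i, ∑ A ∈ U.powerset, w A * (if S i ⊆ A then 1 else 0) = θ ^ u := by
      intro i
      rw [← hu i, ← prRandomSubset_superset (hS i), prRandomSubset_eq_sum]
    rw [Finset.sum_congr rfl fun i _ => this i, Finset.sum_const, nsmul_eq_mul, Finset.card_univ]
  have hEY2 : ∑ A ∈ U.powerset, w A * Y A ^ 2 = ∑ i, ∑ j, θ ^ (S i ∪ S j).card := by
    have : ∀ A, w A * Y A ^ 2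
        = ∑ i, ∑ j, w A * (if S i ∪ S j ⊆ A then 1 else 0) := by
      intro A
      simp only [hY]
      rw [sq, Finset.sum_mul_sum, Finset.mul_sum]
      simp only [Finset.mul_sum, Finset.union_subset_iff]
      refine Finset.sum_congr rfl fun i _ => Finset.sum_congr rfl fun j _ => ?_
      by_cases h1 : S i ⊆ A <;> by_cases h2 : S j ⊆ A <;> simp [h1, h2]
    simp only [this]
    rw [Finset.sum_comm]
    refine Finset.sum_congr rfl fun i _ => ?_
    rw [Finset.sum_comm]
    refine Finset.sum_congr rfl fun j _ => ?_
    rw [← prRandomSubset_superset (Finset.union_subset (hS i) (hS j)), prRandomSubset_eq_sum]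
  have hcheb : 1 - prRandomSubset U θ E ≤ (∑ A ∈ U.powerset, w A * (Y A - μ) ^ 2) / μ ^ 2 := by
    have hcompl : 1 - prRandomSubset U θ E
        = ∑ A ∈ U.powerset, (w A - w A * if E A then 1 else 0) := by
      rw [Finset.sum_sub_distrib, hw1, prRandomSubset_eq_sum]
    rw [hcompl, Finset.sum_div]
    refine Finset.sum_le_sum fun A _ => ?_
    by_cases hE : E A
    · simpa [hE] using div_nonneg (mul_nonneg (hw0 A) (sq_nonneg (Y A - μ))) (sq_nonneg μ)
    · have hY0 : Y A = 0 := Finset.sum_eq_zero fun i _ => if_neg fun hi => hE (h A i hi)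
      have : w A * (Y A - μ) ^ 2 / μ ^ 2 = w A := by
        rw [hY0]
        field_simp
        ring
      simp [hE, this]
  have hvar : ∑ A ∈ U.powerset, w A * (Y A - μ) ^ 2
      = ∑ i, ∑ j, (θ ^ (S i ∪ S j).card - θ ^ u * θ ^ u) := by
    have : ∀ A, w A * (Y A - μ) ^ 2 = w A * Y A ^ 2 - 2 * μ * (w A * Y A) + μ ^ 2 * w A := by
      intro A
      ring
    simp only [this, Finset.sum_add_distrib, Finset.sum_sub_distrib, ← Finset.mul_sum, hEY, hEY2,
      hw1]
    simp [hμ, hN]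
    ring
  refine hcheb.trans ?_
  have hterm : ∀ i j, θ ^ (S i ∪ S j).card - θ ^ u * θ ^ u ≤ (θ ^ u) ^ 2 *
      if Disjoint (S i) (S j) then 0 else θ⁻¹ ^ (S i ∩ S j).card := by
    intro i j
    have hc := Finset.card_union_add_card_inter (S i) (S j)
    rw [hu, hu] at hc
    have hmul : θ ^ (S i ∪ S j).card * θ ^ (S i ∩ S j).card = θ ^ u * θ ^ u := by
      rw [← pow_add, hc, pow_add]
    split_ifs with hd
    · rw [Finset.disjoint_iff_inter_eq_empty.1 hd] at hmul
      simp at hmul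
      simp [hmul]
    · rw [sq, ← hmul, inv_pow, mul_inv_cancel_right₀ (pow_pos hθ _).ne', hmul]
      have := pow_pos hθ u
      nlinarith
  calc _ ≤ (∑ i, ∑ j, (θ ^ u) ^ 2 *
        if Disjoint (S i) (S j) then 0 else θ⁻¹ ^ (S i ∩ S j).card) / μ ^ 2 := by
        rw [hvar]
        gcongr with i _ j _
        exact hterm i j
    _ = _ := by
      simp only [← Finset.mul_sum]
      rw [hμ, mul_pow]
      field_simp

end RandomSubset

section Flats

open scoped Classical

variable {K V X Y : Type*} [Field K] [AddCommGroup V] [Module K V]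
  [AddCommGroup X] [Module K X] [AddCommGroup Y] [Module K Y]

theorem graphFlat_injective (e : V ≃ₗ[K] X × Y) (p : (X →ₗ[K] Y) × Y) :
    Function.Injective fun x : X => e.symm (x, p.1 x + p.2) := by
  intro x y h
  exact congrArg Prod.fst (e.symm.injective h)

variable [Fintype X]

/-- The graph of the affine map `x ↦ p.1 x + p.2`, transported along `e`. -/
noncomputable def graphFlat (e : V ≃ₗ[K] X × Y) (p : (X →ₗ[K] Y) × Y) : Finset V :=
  Finset.univ.image fun x : X => e.symm (x, p.1 x + p.2)

theorem card_graphFlat (e : V ≃ₗ[K] X × Y) (p : (X →ₗ[K] Y) × Y) :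
    (graphFlat e p).card = Fintype.card X := by
  rw [graphFlat, Finset.card_image_of_injective _ (graphFlat_injective e p), Finset.card_univ]

theorem isFlat_graphFlat (e : V ≃ₗ[K] X × Y) (p : (X →ₗ[K] Y) × Y) :
    IsFlat K (Module.finrank K X) (graphFlat e p : Set V) := by
  let L : X →ₗ[K] V := e.symm.toLinearMap ∘ₗ LinearMap.prod LinearMap.id p.1
  have hL : Function.Injective L := fun x y h => congrArg Prod.fst (e.symm.injective h)
  refine ⟨LinearMap.range L, LinearMap.finrank_range_of_inj hL, e.symm (0, p.2), ?_⟩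
  have hx : ∀ x, e.symm (0, p.2) + L x = e.symm (x, p.1 x + p.2) := by
    intro x
    simp [L, ← map_add, add_comm]
  ext v
  simp only [graphFlat, Finset.coe_image, Finset.coe_univ, Set.image_univ, Set.mem_range,
    Set.mem_image, SetLike.mem_coe, LinearMap.mem_range, exists_exists_eq_and, hx]

theorem card_graphFlat_inter (e : V ≃ₗ[K] X × Y) (p r : (X →ₗ[K] Y) × Y) :
    (graphFlat e p ∩ graphFlat e r).card
      = (Finset.univ.filter fun x : X => (p - r).1 x + (p - r).2 = 0).card := by
  rw [← Finset.card_image_of_injective _ (graphFlat_injective e p)]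
  congr 1
  ext v
  simp only [graphFlat, Finset.mem_inter, Finset.mem_image, Finset.mem_univ, true_and,
    Finset.mem_filter, Prod.fst_sub, Prod.snd_sub, LinearMap.sub_apply]
  constructor
  · rintro ⟨⟨x, rfl⟩, y, hy⟩
    have h := e.symm.injective hy
    obtain rfl : y = x := congrArg Prod.fst h
    refine ⟨y, ?_, rfl⟩
    have h2 : r.1 y + r.2 = p.1 y + p.2 := congrArg Prod.snd h
    rw [sub_add_sub_comm, h2, sub_self]
  · rintro ⟨x, hx, rfl⟩
    refine ⟨⟨x, rfl⟩, x, ?_⟩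
    rw [sub_add_sub_comm, sub_eq_zero] at hx
    rw [hx]

variable [Fintype K]

theorem card_zeros_eq {A : X →ₗ[K] Y} {b : Y} {x : X} (hx : A x + b = 0) :
    (Finset.univ.filter fun y : X => A y + b = 0).card
      = Fintype.card K ^ Module.finrank K (LinearMap.ker A) := by
  rw [← Nat.card_eq_fintype_card, ← Module.natCard_eq_pow_finrank (K := K),
    ← Nat.card_eq_finsetCard]
  refine Nat.card_congr ((Equiv.subRight x).subtypeEquiv fun y => ?_)
  simp only [Finset.mem_filter, Finset.mem_univ, true_and, Equiv.subRight_apply,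
    LinearMap.mem_ker, map_sub]
  rw [eq_neg_of_add_eq_zero_left hx, sub_neg_eq_add]

variable [Fintype Y]

theorem natCard_linearMap :
    Nat.card (X →ₗ[K] Y)
      = Fintype.card K ^ (Module.finrank K X * Module.finrank K Y) := by
  rw [Module.natCard_eq_pow_finrank (K := K), Module.finrank_linearMap, Nat.card_eq_fintype_card]

theorem natCard_submodule_le :
    Nat.card (Submodule K X) ≤ Fintype.card K ^ (Module.finrank K X * Module.finrank K X) := by
  have := DFunLike.finite (X →ₗ[K] X)
  rw [← natCard_linearMap]
  refine Nat.card_le_card_of_surjective (fun f : X →ₗ[K] X => LinearMap.range f) fun W => ?_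
  obtain ⟨f, hf⟩ := W.subtype.exists_leftInverse_of_injective (by simp)
  refine ⟨W.subtype ∘ₗ f, ?_⟩
  have hfs : Function.Surjective f := fun w => ⟨w, LinearMap.congr_fun hf w⟩
  simp [LinearMap.range_comp, LinearMap.range_eq_top.2 hfs]

theorem card_filter_ker_eq_le [Fintype (X →ₗ[K] Y)] (W : Submodule K X) :
    (Finset.univ.filter fun A : X →ₗ[K] Y => LinearMap.ker A = W).card
      ≤ Fintype.card K ^ (Module.finrank K Y * (Module.finrank K X - Module.finrank K W)) := by
  have := DFunLike.finite ((X ⧸ W) →ₗ[K] Y)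
  have : Fintype ((X ⧸ W) →ₗ[K] Y) := Fintype.ofFinite _
  have hsub : (Finset.univ.filter fun A : X →ₗ[K] Y => LinearMap.ker A = W)
      ⊆ Finset.univ.image fun B : (X ⧸ W) →ₗ[K] Y => B ∘ₗ W.mkQ := by
    intro A hA
    simp only [Finset.mem_filter, Finset.mem_univ, true_and] at hA
    exact Finset.mem_image.2 ⟨W.liftQ A hA.ge, Finset.mem_univ _, W.liftQ_mkQ A hA.ge⟩
  refine (Finset.card_le_card hsub).trans (Finset.card_image_le.trans ?_)
  rw [Finset.card_univ, ← Nat.card_eq_fintype_card, Module.natCard_eq_pow_finrank (K := K),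
    Module.finrank_linearMap, Nat.card_eq_fintype_card, Submodule.finrank_quotient, mul_comm]

theorem sum_zeros_le [Fintype (X →ₗ[K] Y)] {c M : ℝ} (hc : 0 ≤ c) (hM0 : 0 ≤ M)
    (hM : ∀ k < Module.finrank K X, (Fintype.card K : ℝ) ^
      (Module.finrank K Y * (Module.finrank K X - k)) * c ^ Fintype.card K ^ k ≤ M) :
    (∑ h : (X →ₗ[K] Y) × Y, if (Finset.univ.filter fun x : X => h.1 x + h.2 = 0).card = 0 then 0
      else c ^ (Finset.univ.filter fun x : X => h.1 x + h.2 = 0).card) ≤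
      c ^ Fintype.card X + (Fintype.card K : ℝ) ^
        (Module.finrank K X * Module.finrank K X + Module.finrank K X) * M := by
  have : Fintype (Submodule K X) := Fintype.ofFinite _
  have hX : Fintype.card X = Fintype.card K ^ Module.finrank K X :=
    Module.card_eq_pow_finrank
  set q := Fintype.card K
  set m := Module.finrank K X
  have hbound : ∀ A : X →ₗ[K] Y, ∀ b : Y,
      (if (Finset.univ.filter fun x : X => A x + b = 0).card = 0 then 0
        else c ^ (Finset.univ.filter fun x : X => A x + b = 0).card) ≤
      if b ∈ Finset.univ.image (fun x => - A x) then
        c ^ q ^ Module.finrank K (LinearMap.ker A) else 0 := by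
    intro A b
    split_ifs with h1 h2 h2
    · positivity
    · rfl
    · obtain ⟨x, hx⟩ := Finset.card_pos.1 (Nat.pos_of_ne_zero h1)
      rw [card_zeros_eq (Finset.mem_filter.1 hx).2]
    · exfalso
      obtain ⟨x, hx⟩ := Finset.card_pos.1 (Nat.pos_of_ne_zero h1)
      refine h2 (Finset.mem_image.2 ⟨x, Finset.mem_univ _, ?_⟩)
      exact (eq_neg_of_add_eq_zero_right (Finset.mem_filter.1 hx).2).symm
  have hA : ∀ A : X →ₗ[K] Y, (∑ b : Y, if b ∈ Finset.univ.image (fun x => - A x) then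
        c ^ q ^ Module.finrank K (LinearMap.ker A) else 0)
      = ((Finset.univ.image fun x => - A x).card : ℝ) *
        c ^ q ^ Module.finrank K (LinearMap.ker A) := by
    intro A
    rw [← Finset.sum_filter, Finset.sum_const, nsmul_eq_mul]
    congr 3
    ext b
    simp
  rw [Fintype.sum_prod_type]
  calc _ ≤ ∑ A : X →ₗ[K] Y, ((Finset.univ.image fun x => - A x).card : ℝ) *
        c ^ q ^ Module.finrank K (LinearMap.ker A) := by
        refine Finset.sum_le_sum fun A _ => ?_
        rw [← hA]
        exact Finset.sum_le_sum fun b _ => hbound A b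
    _ = c ^ Fintype.card X + ∑ A ∈ Finset.univ.erase (0 : X →ₗ[K] Y),
        ((Finset.univ.image fun x => - A x).card : ℝ) *
        c ^ q ^ Module.finrank K (LinearMap.ker A) := by
        rw [← Finset.add_sum_erase _ _ (Finset.mem_univ (0 : X →ₗ[K] Y))]
        congr 1
        rw [LinearMap.ker_zero, finrank_top, hX]
        simp [Finset.image_const (Finset.univ_nonempty (α := X)), m]
    _ ≤ c ^ Fintype.card X + ∑ A ∈ Finset.univ.erase (0 : X →ₗ[K] Y),
        (q : ℝ) ^ m * c ^ q ^ Module.finrank K (LinearMap.ker A) := by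
        gcongr with A _
        have := Finset.card_image_le (s := Finset.univ) (f := fun x : X => - A x)
        rw [Finset.card_univ, hX] at this
        exact_mod_cast this
    _ ≤ c ^ Fintype.card X + ∑ _W : Submodule K X, (q : ℝ) ^ m * M := by
        gcongr
        rw [← Finset.sum_fiberwise_of_maps_to (t := Finset.univ)
          (g := fun A : X →ₗ[K] Y => LinearMap.ker A) (fun _ _ => Finset.mem_univ _)]
        refine Finset.sum_le_sum fun W _ => ?_
        by_cases hW : W = ⊤
        · rw [Finset.filter_false_of_mem, Finset.sum_empty]
          · positivity
          · intro A hA' h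
            exact (Finset.mem_erase.1 hA').1 (LinearMap.ker_eq_top.1 (h.trans hW))
        · have hlt : Module.finrank K W < m := Submodule.finrank_lt hW
          have hle := hM _ hlt
          calc _ = ∑ A ∈ (Finset.univ.erase (0 : X →ₗ[K] Y)).filter (LinearMap.ker · = W),
                (q : ℝ) ^ m * c ^ q ^ Module.finrank K W := by
                refine Finset.sum_congr rfl fun A hA' => ?_
                rw [(Finset.mem_filter.1 hA').2]
            _ = (((Finset.univ.erase (0 : X →ₗ[K] Y)).filter (LinearMap.ker · = W)).card : ℝ) *
                ((q : ℝ) ^ m * c ^ q ^ Module.finrank K W) := by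
                rw [Finset.sum_const, nsmul_eq_mul]
            _ ≤ (q : ℝ) ^ (Module.finrank K Y * (m - Module.finrank K W)) *
                ((q : ℝ) ^ m * c ^ q ^ Module.finrank K W) := by
                gcongr
                have h1 := card_filter_ker_eq_le (Y := Y) W
                have h2 := Finset.card_le_card (Finset.filter_subset_filter
                  (LinearMap.ker · = W) (Finset.erase_subset (0 : X →ₗ[K] Y) Finset.univ))
                exact_mod_cast h2.trans h1
            _ = (q : ℝ) ^ m * ((q : ℝ) ^ (Module.finrank K Y * (m - Module.finrank K W)) *
                c ^ q ^ Module.finrank K W) := by ring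
            _ ≤ _ := by gcongr
    _ ≤ _ := by
        rw [Finset.sum_const, nsmul_eq_mul, Finset.card_univ, pow_add, mul_assoc]
        gcongr
        have := natCard_submodule_le (K := K) (X := X)
        rw [Nat.card_eq_fintype_card] at this
        exact_mod_cast this

variable [Fintype V]

theorem prRandomSubset_isFlat_le {θ : ℝ} (hθ : 0 ≤ θ) (hθ' : θ ≤ 1) (m : ℕ) :
    prRandomSubset (Finset.univ : Finset V) θ
      (fun A => ∃ S : Set V, IsFlat K m S ∧ S ⊆ (A : Set V)) ≤
      (Fintype.card V : ℝ) ^ (m + 1) * θ ^ Fintype.card K ^ m := by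
  let S : V × (Fin m → V) → Finset V := fun p =>
    ((p.1 + ·) '' (Submodule.span K (Set.range p.2) : Set V)).toFinset
  let I : Finset (V × (Fin m → V)) := Finset.univ.filter fun p => LinearIndependent K p.2
  have hcard : ∀ p ∈ I, (S p).card = Fintype.card K ^ m := by
    intro p hp
    have hp' : LinearIndependent K p.2 := by simpa [I] using hp
    rw [Set.toFinset_card, Set.card_image_of_injective _ (add_right_injective p.1),
      ← Nat.card_eq_fintype_card]
    simp only [SetLike.coe_sort_coe]
    rw [Module.natCard_eq_pow_finrank (K := K), finrank_span_eq_card hp', Fintype.card_fin,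
      Nat.card_eq_fintype_card]
  refine (prRandomSubset_le_sum (P := fun p A => S p ⊆ A) hθ hθ' I ?_).trans ?_
  · rintro A ⟨T, ⟨W, hW, v, rfl⟩, hTA⟩
    let b := Module.finBasisOfFinrankEq K W hW
    have hspan : Submodule.span K (Set.range fun i => (b i : V)) = W := by
      have : (Set.range fun i => (b i : V)) = W.subtype '' Set.range b := by
        rw [← Set.range_comp]
        rfl
      rw [this, Submodule.span_image, b.span_eq]
      simp
    refine ⟨(v, fun i => b i), ?_, ?_⟩
    · exact Finset.mem_filter.2
        ⟨Finset.mem_univ _, b.linearIndependent.map' W.subtype W.ker_subtype⟩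
    · intro x hx
      simp only [S, Set.mem_toFinset, hspan] at hx
      exact_mod_cast hTA hx
  · calc _ = ∑ p ∈ I, θ ^ Fintype.card K ^ m := by
          refine Finset.sum_congr rfl fun p hp => ?_
          rw [prRandomSubset_superset (Finset.subset_univ _), hcard p hp]
      _ = (I.card : ℝ) * θ ^ Fintype.card K ^ m := by simp
      _ ≤ _ := by
          gcongr
          have := Finset.card_le_univ I
          rw [Fintype.card_prod, Fintype.card_fun, Fintype.card_fin] at this
          rw [pow_succ']
          exact_mod_cast this

theorem one_sub_prRandomSubset_isFlat_le {θ M : ℝ} (hθ : 0 < θ) (hθ' : θ ≤ 1) (hM0 : 0 ≤ M)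
    (e : V ≃ₗ[K] X × Y)
    (hM : ∀ k < Module.finrank K X, (Fintype.card K : ℝ) ^
      (Module.finrank K Y * (Module.finrank K X - k)) * θ⁻¹ ^ Fintype.card K ^ k ≤ M) :
    1 - prRandomSubset (Finset.univ : Finset V) θ
      (fun A => ∃ S : Set V, IsFlat K (Module.finrank K X) S ∧ S ⊆ (A : Set V)) ≤
      (θ⁻¹ ^ Fintype.card K ^ Module.finrank K X + (Fintype.card K : ℝ) ^
        (Module.finrank K X * Module.finrank K X + Module.finrank K X) * M) /
        (Fintype.card K : ℝ) ^ (Module.finrank K Y * (Module.finrank K X + 1)) := by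
  have := DFunLike.finite (X →ₗ[K] Y)
  have : Fintype (X →ₗ[K] Y) := Fintype.ofFinite _
  refine (one_sub_prRandomSubset_le hθ hθ' (S := graphFlat e) (fun _ => Finset.subset_univ _)
    (card_graphFlat e) fun A p hp =>
      ⟨graphFlat e p, isFlat_graphFlat e p, by exact_mod_cast hp⟩).trans ?_
  have hN : (Fintype.card ((X →ₗ[K] Y) × Y) : ℝ)
      = (Fintype.card K : ℝ) ^ (Module.finrank K Y * (Module.finrank K X + 1)) := by
    rw [Fintype.card_prod, ← Nat.card_eq_fintype_card, natCard_linearMap,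
      Module.card_eq_pow_finrank (K := K) (V := Y)]
    push_cast
    ring
  have hcard : (0 : ℝ) < Fintype.card ((X →ₗ[K] Y) × Y) := by exact_mod_cast Fintype.card_pos
  rw [← hN]
  set f : (X →ₗ[K] Y) × Y → ℝ := fun h =>
    if (Finset.univ.filter fun x : X => h.1 x + h.2 = 0).card = 0 then 0
      else θ⁻¹ ^ (Finset.univ.filter fun x : X => h.1 x + h.2 = 0).card with hf
  have hsum : ∑ p, ∑ r, (if Disjoint (graphFlat e p) (graphFlat e r) then 0
      else θ⁻¹ ^ (graphFlat e p ∩ graphFlat e r).card)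
      = (Fintype.card ((X →ₗ[K] Y) × Y) : ℝ) * ∑ h, f h := by
    rw [← nsmul_eq_mul, ← Finset.card_univ, ← Finset.sum_const]
    refine Finset.sum_congr rfl fun p _ => ?_
    rw [← Equiv.sum_comp (Equiv.subLeft p) f]
    refine Finset.sum_congr rfl fun r _ => ?_
    simp only [hf, Equiv.subLeft_apply, Finset.disjoint_iff_inter_eq_empty,
      ← Finset.card_eq_zero, card_graphFlat_inter e]
  rw [hsum, sq, mul_div_mul_left _ _ hcard.ne']
  gcongr
  have := sum_zeros_le (K := K) (X := X) (Y := Y) (inv_nonneg.2 hθ.le) hM0 hM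
  rwa [Module.card_eq_pow_finrank (K := K) (V := X)] at this

end Flats

section Threshold

/-- The threshold `q ^ (-n (m + 1) / q ^ m)` for the appearance of an `m`-flat in `F_q ^ n`. -/
noncomputable def flatThreshold (n q m : ℕ) : ℝ :=
  (q : ℝ) ^ (-(((n : ℝ) * ((m : ℝ) + 1)) / (q : ℝ) ^ m))

/-- The probability that a random subset of `F ^ n` contains an `m`-flat. -/
noncomputable def prContainsFlat (F : Type) [Field F] [Fintype F] (n m : ℕ) (θ : ℝ) : ℝ :=
  prRandomSubset (Finset.univ : Finset (Fin n → F)) θ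
    (fun A => ∃ S : Set (Fin n → F), IsFlat F m S ∧ S ⊆ (A : Set (Fin n → F)))

variable {F : Type} [Field F] [Fintype F] {n q m : ℕ} {θ : ℝ}

theorem flatThreshold_pos (hq : 0 < q) : 0 < flatThreshold n q m :=
  Real.rpow_pos_of_pos (Nat.cast_pos.2 hq) _

theorem flatThreshold_pow (k : ℕ) :
    flatThreshold n q m ^ k = (q : ℝ) ^ (-((n : ℝ) * (m + 1) * k / (q : ℝ) ^ m)) := by
  rw [flatThreshold, ← Real.rpow_natCast, ← Real.rpow_mul (Nat.cast_nonneg q)]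
  congr 1
  ring

theorem flatThreshold_pow_card (hq : 0 < q) :
    flatThreshold n q m ^ q ^ m = ((q : ℝ) ^ (n * (m + 1)))⁻¹ := by
  have : (0 : ℝ) < q := Nat.cast_pos.2 hq
  rw [flatThreshold_pow, ← Real.rpow_natCast (q : ℝ) (n * (m + 1)), ← Real.rpow_neg this.le]
  congr 1
  push_cast
  field_simp

theorem prContainsFlat_nonneg (hθ : 0 ≤ θ) (hθ' : θ ≤ 1) : 0 ≤ prContainsFlat F n m θ :=
  prRandomSubset_nonneg hθ hθ' _

theorem prContainsFlat_le_one (hθ : 0 ≤ θ) (hθ' : θ ≤ 1) : prContainsFlat F n m θ ≤ 1 :=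
  prRandomSubset_le_one hθ hθ' _

theorem prContainsFlat_le (hq : Fintype.card F = q) (hθ : 0 ≤ θ) (hθ' : θ ≤ 1) :
    prContainsFlat F n m θ ≤ (θ / flatThreshold n q m) ^ q ^ m := by
  refine (prRandomSubset_isFlat_le hθ hθ' m).trans_eq ?_
  rw [div_pow, flatThreshold_pow_card (hq ▸ Fintype.card_pos), Fintype.card_fun, hq,
    Fintype.card_fin, div_inv_eq_mul, mul_comm, pow_mul]
  push_cast
  rfl

theorem one_sub_prContainsFlat_le_rpow (hq : Fintype.card F = q) (hmn : m < n) {b : ℝ}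
    (hb : ∀ k < m, ((m : ℝ) + 1) * q ^ k / q ^ m ≤ k + 1 - b)
    (hθ : 0 < θ) (hθ' : θ ≤ 1) (ht : flatThreshold n q m ≤ θ) :
    1 - prContainsFlat F n m θ ≤
      ((q : ℝ) ^ m) ^ (m + 1) * (flatThreshold n q m / θ) ^ q ^ m +
        flatThreshold n q m / θ * (q : ℝ) ^ (((2 * m * m + m : ℕ) : ℝ) - n * b) := by
  have hq0 : 0 < q := hq ▸ Fintype.card_pos
  have hq1 : (1 : ℝ) ≤ q := by exact_mod_cast hq0
  have hqpos : (0 : ℝ) < q := by exact_mod_cast hq0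
  set t := flatThreshold n q m with ht_def
  have htpos : 0 < t := flatThreshold_pos hq0
  set s := t / θ with hs
  have hs0 : 0 < s := div_pos htpos hθ
  have hs1 : s ≤ 1 := (div_le_one hθ).2 ht
  have hθs : θ⁻¹ = s * t⁻¹ := by
    rw [hs]
    field_simp
  obtain ⟨l, rfl⟩ := Nat.exists_eq_add_of_lt hmn
  have hfin : Module.finrank F (Fin (m + l + 1) → F)
      = Module.finrank F ((Fin m → F) × (Fin (l + 1) → F)) := by
    simp [add_assoc]
  let e := LinearEquiv.ofFinrankEq (R := F) _ _ hfin
  set M : ℝ := s * (q : ℝ) ^ ((l + 1) * (m + 1)) *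
    (q : ℝ) ^ (((m * m : ℕ) : ℝ) - (m + l + 1 : ℕ) * b) with hM
  have hM0 : 0 ≤ M := by positivity
  have key := one_sub_prRandomSubset_isFlat_le (M := M) hθ hθ' hM0 e (by
    intro k hk
    rw [Module.finrank_fin_fun] at hk
    rw [hq, Module.finrank_fin_fun, Module.finrank_fin_fun, hθs, mul_pow, inv_pow, ht_def,
      flatThreshold_pow, ← Real.rpow_neg hqpos.le, neg_neg]
    have h1 : s ^ q ^ k ≤ s := pow_le_of_le_one hs0.le hs1 (pow_pos hq0 k).ne'
    calc _ ≤ (q : ℝ) ^ ((l + 1) * (m - k)) * (s * (q : ℝ) ^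
          (((m + l + 1 : ℕ) : ℝ) * (k + 1 - b))) := by
          refine mul_le_mul_of_nonneg_left (mul_le_mul h1
            (Real.rpow_le_rpow_of_exponent_le hq1 ?_) (by positivity) hs0.le) (by positivity)
          rw [mul_assoc, mul_div_assoc, Nat.cast_pow]
          exact mul_le_mul_of_nonneg_left (hb k hk) (Nat.cast_nonneg _)
      _ = s * (q : ℝ) ^ ((((l + 1) * (m - k) : ℕ) : ℝ) +
          ((m + l + 1 : ℕ) : ℝ) * (k + 1 - b)) := by
          rw [Real.rpow_add hqpos, Real.rpow_natCast]
          ring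
      _ ≤ s * (q : ℝ) ^ ((((l + 1) * (m + 1) : ℕ) : ℝ) +
          (((m * m : ℕ) : ℝ) - (m + l + 1 : ℕ) * b)) := by
          refine mul_le_mul_of_nonneg_left (Real.rpow_le_rpow_of_exponent_le hq1 ?_) hs0.le
          push_cast [Nat.cast_sub hk.le]
          have hk' : (k : ℝ) + 1 ≤ m := by exact_mod_cast hk
          nlinarith [mul_le_mul_of_nonneg_left hk' (Nat.cast_nonneg (α := ℝ) m)]
      _ = M := by
          rw [Real.rpow_add hqpos, Real.rpow_natCast, hM]
          ring)
  rw [Module.finrank_fin_fun, Module.finrank_fin_fun, hq] at key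
  refine key.trans_eq ?_
  have hC : (q : ℝ) ^ (((2 * m * m + m : ℕ) : ℝ) - (m + l + 1 : ℕ) * b)
      = (q : ℝ) ^ (m * m + m) * (q : ℝ) ^ (((m * m : ℕ) : ℝ) - (m + l + 1 : ℕ) * b) := by
    rw [← Real.rpow_natCast, ← Real.rpow_add hqpos]
    congr 1
    push_cast
    ring
  rw [hθs, mul_pow, inv_pow, ht_def, flatThreshold_pow_card hq0, inv_inv, hC, hM, add_div]
  congr 1
  · rw [div_eq_iff (by positivity)]
    ring
  · field_simp

theorem add_one_mul_le_mul_two_pow (k j : ℕ) : k + j + 1 ≤ (k + 1) * 2 ^ j := by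
  have : j < 2 ^ j := Nat.lt_two_pow_self
  nlinarith

theorem three_mul_le_mul_three_pow (k j : ℕ) (hj : 1 ≤ j) :
    3 * (k + j + 1) ≤ 2 * (k + 1) * 3 ^ j := by
  induction j, hj using Nat.le_induction with
  | base => omega
  | succ j hj ih =>
    rw [pow_succ]
    nlinarith

theorem one_sub_prContainsFlat_le (hq : Fintype.card F = q) (hmn : m < n)
    (hn : 3 * (2 * m * m + m) ≤ n) (hθ : 0 < θ) (hθ' : θ ≤ 1) (ht : flatThreshold n q m ≤ θ) :
    1 - prContainsFlat F n m θ ≤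
      ((q : ℝ) ^ m) ^ (m + 1) * (flatThreshold n q m / θ) ^ q ^ m +
        if q = 2 then flatThreshold n q m / θ * 2 ^ (2 * m * m + m)
        else (3 : ℝ) ^ (((2 * m * m + m : ℕ) : ℝ) - n / 3) := by
  have hq2 : 2 ≤ q := hq ▸ Fintype.one_lt_card
  have hs1 : flatThreshold n q m / θ ≤ 1 := (div_le_one hθ).2 ht
  split_ifs with h2
  · refine (one_sub_prContainsFlat_le_rpow (b := 0) hq hmn ?_ hθ hθ' ht).trans_eq ?_
    · intro k hk
      obtain ⟨j, rfl⟩ := Nat.exists_eq_add_of_le hk.le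
      rw [sub_zero, div_le_iff₀ (by positivity), h2]
      have : ((k + j + 1 : ℕ) : ℝ) ≤ ((k + 1) * 2 ^ j : ℕ) :=
        Nat.cast_le.2 (add_one_mul_le_mul_two_pow k j)
      push_cast at this ⊢
      rw [pow_add]
      have hk2 : (0 : ℝ) < 2 ^ k := by positivity
      nlinarith
    · rw [mul_zero, sub_zero, Real.rpow_natCast, h2]
      norm_num
  · have hq3 : 3 ≤ q := by omega
    have hq3' : (3 : ℝ) ≤ q := by exact_mod_cast hq3
    refine (one_sub_prContainsFlat_le_rpow (b := 1 / 3) hq hmn ?_ hθ hθ' ht).trans ?_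
    · intro k hk
      obtain ⟨j, rfl⟩ := Nat.exists_eq_add_of_le hk.le
      rw [div_le_iff₀ (by positivity)]
      have h1 : (3 * (k + j + 1 : ℕ) : ℝ) ≤ (2 * (k + 1) * 3 ^ j : ℕ) := by
        exact_mod_cast three_mul_le_mul_three_pow k j (by omega)
      have h3 : (3 : ℝ) ^ j ≤ (q : ℝ) ^ j := by gcongr
      push_cast at h1 ⊢
      rw [pow_add]
      have hk2 : (0 : ℝ) < (q : ℝ) ^ k := by positivity
      have h4 : (k : ℝ) + j + 1 ≤ (k + 1 - 1 / 3) * (q : ℝ) ^ j := by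
        have hk0 : (0 : ℝ) ≤ k := Nat.cast_nonneg k
        have hj0 : (0 : ℝ) < (q : ℝ) ^ j := by positivity
        nlinarith [mul_nonneg hk0 hj0.le]
      nlinarith
    · gcongr
      have hexp : ((2 * m * m + m : ℕ) : ℝ) - n * (1 / 3) ≤ 0 := by
        have : ((3 * (2 * m * m + m) : ℕ) : ℝ) ≤ n := Nat.cast_le.2 hn
        push_cast at this ⊢
        linarith
      calc _ ≤ 1 * (q : ℝ) ^ (((2 * m * m + m : ℕ) : ℝ) - n * (1 / 3)) := by gcongr
        _ ≤ 1 * (3 : ℝ) ^ (((2 * m * m + m : ℕ) : ℝ) - n * (1 / 3)) := by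
          rw [one_mul, one_mul]
          exact Real.rpow_le_rpow_of_nonpos (by norm_num) hq3' hexp
        _ = _ := by
          rw [one_mul]
          congr 2
          ring

theorem exists_pow_mul_pow_le (d : ℕ) : ∃ C : ℝ, 0 ≤ C ∧ ∀ (u : ℕ) (s : ℝ), 1 ≤ u → 0 ≤ s →
    s ≤ 1 / 2 → (u : ℝ) ^ d * s ^ u ≤ C * s := by
  obtain ⟨C, hC⟩ := (tendsto_pow_const_mul_const_pow_of_abs_lt_one d
    (r := (1 / 2 : ℝ)) (by rw [abs_of_pos] <;> norm_num)).bddAbove_range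
  have hC' : ∀ u : ℕ, (u : ℝ) ^ d * (1 / 2) ^ u ≤ C := fun u => hC ⟨u, rfl⟩
  have hC0 : 0 ≤ C := le_trans (by positivity) (hC' 0)
  refine ⟨C * 2, by positivity, fun u s hu hs0 hs => ?_⟩
  have h2 : (2 * s) ^ u ≤ 2 * s := pow_le_of_le_one (by positivity) (by linarith) (by omega)
  calc (u : ℝ) ^ d * s ^ u = (u : ℝ) ^ d * (1 / 2) ^ u * (2 * s) ^ u := by
        rw [mul_assoc, ← mul_pow]
        congr 2
        ring
    _ ≤ C * (2 * s) := mul_le_mul (hC' u) h2 (by positivity) hC0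
    _ = C * 2 * s := by ring

theorem tendsto_rpow_sub_div_three {n : ℕ → ℕ} (hn : Tendsto n atTop atTop) (c : ℝ) :
    Tendsto (fun i => (3 : ℝ) ^ (c - n i / 3)) atTop (nhds 0) := by
  have h1 : Tendsto (fun i => c - (n i : ℝ) / 3) atTop atBot :=
    tendsto_const_nhds.add_atBot (tendsto_neg_atTop_atBot.comp
      ((tendsto_natCast_atTop_atTop.comp hn).atTop_div_const (by norm_num : (0 : ℝ) < 3)))
  exact (tendsto_rpow_atBot_of_base_gt_one 3 (by norm_num)).comp h1

end Threshold

section Limits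

variable {n q : ℕ → ℕ} {F : ℕ → Type} [∀ i, Field (F i)] [∀ i, Fintype (F i)] {m : ℕ}
  {θ : ℕ → ℝ}

theorem tendsto_prContainsFlat_one {f : ℕ → ℝ} (hθ : ∀ i, 0 ≤ θ i ∧ θ i ≤ 1)
    (hf : Tendsto f atTop (nhds 0))
    (h : ∀ᶠ i in atTop, 1 - prContainsFlat (F i) (n i) m (θ i) ≤ f i) :
    Tendsto (fun i => prContainsFlat (F i) (n i) m (θ i)) atTop (nhds 1) := by
  refine tendsto_of_tendsto_of_tendsto_of_le_of_le' (g := fun i => 1 - f i)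
    (by simpa using hf.const_sub 1) tendsto_const_nhds ?_ ?_
  · filter_upwards [h] with i hi
    linarith
  · exact Eventually.of_forall fun i => prContainsFlat_le_one (hθ i).1 (hθ i).2

theorem tendsto_prContainsFlat_of_isLittleO (hq : ∀ i, Fintype.card (F i) = q i)
    (hθ : ∀ i, 0 ≤ θ i ∧ θ i ≤ 1) (h : θ =o[atTop] fun i => flatThreshold (n i) (q i) m) :
    Tendsto (fun i => prContainsFlat (F i) (n i) m (θ i)) atTop (nhds 0) := by
  have hq0 : ∀ i, 0 < q i := fun i => hq i ▸ Fintype.card_pos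
  have hr := h.tendsto_div_nhds_zero
  refine squeeze_zero' (Eventually.of_forall fun i => prContainsFlat_nonneg (hθ i).1 (hθ i).2) ?_ hr
  filter_upwards [hr.eventually_le_const one_pos] with i hi
  exact (prContainsFlat_le (hq i) (hθ i).1 (hθ i).2).trans (pow_le_of_le_one
    (div_nonneg (hθ i).1 (flatThreshold_pos (hq0 i)).le) hi (pow_pos (hq0 i) m).ne')

theorem tendsto_prContainsFlat_of_isLittleO' (hmn : ∀ i, m < n i)
    (hq : ∀ i, Fintype.card (F i) = q i) (hn : Tendsto n atTop atTop)
    (hθ : ∀ i, 0 ≤ θ i ∧ θ i ≤ 1) (h : (fun i => flatThreshold (n i) (q i) m) =o[atTop] θ) :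
    Tendsto (fun i => prContainsFlat (F i) (n i) m (θ i)) atTop (nhds 1) := by
  have hq0 : ∀ i, 0 < q i := fun i => hq i ▸ Fintype.card_pos
  obtain ⟨C, -, hC⟩ := exists_pow_mul_pow_le (m + 1)
  have hs := h.tendsto_div_nhds_zero
  have hlim : Tendsto (fun i => C * (flatThreshold (n i) (q i) m / θ i) +
      (flatThreshold (n i) (q i) m / θ i * 2 ^ (2 * m * m + m) +
        (3 : ℝ) ^ (((2 * m * m + m : ℕ) : ℝ) - n i / 3))) atTop (nhds 0) := by
    simpa using (hs.const_mul C).add ((hs.mul_const ((2 : ℝ) ^ (2 * m * m + m))).add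
      (tendsto_rpow_sub_div_three hn ((2 * m * m + m : ℕ) : ℝ)))
  refine tendsto_prContainsFlat_one hθ hlim ?_
  filter_upwards [hs.eventually_le_const (by norm_num : (0 : ℝ) < 1 / 2),
    h.bound one_pos, hn.eventually_ge_atTop (3 * (2 * m * m + m))] with i hi hb hni
  have ht := flatThreshold_pos (n := n i) (m := m) (hq0 i)
  rw [one_mul, Real.norm_of_nonneg ht.le, Real.norm_of_nonneg (hθ i).1] at hb
  have hθ0 : 0 < θ i := ht.trans_le hb
  have hs0 : 0 < flatThreshold (n i) (q i) m / θ i := div_pos ht hθ0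
  refine (one_sub_prContainsFlat_le (hq i) (hmn i) hni hθ0 (hθ i).2 hb).trans ?_
  refine add_le_add ?_ ?_
  · exact_mod_cast hC (q i ^ m) _ (Nat.one_le_pow _ _ (hq0 i)) hs0.le hi
  · split_ifs
    · exact le_add_of_nonneg_right (by positivity)
    · exact le_add_of_nonneg_left (by positivity)

theorem tendsto_prContainsFlat_of_le (hm : 1 ≤ m) (hq : ∀ i, Fintype.card (F i) = q i)
    (hqtop : Tendsto q atTop atTop) {ε : ℝ} (hε : 0 < ε) (hθ : ∀ i, 0 ≤ θ i ∧ θ i ≤ 1)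
    (h : ∀ i, θ i ≤ (1 - ε) * flatThreshold (n i) (q i) m) :
    Tendsto (fun i => prContainsFlat (F i) (n i) m (θ i)) atTop (nhds 0) := by
  have ht : ∀ i, 0 < flatThreshold (n i) (q i) m := fun i =>
    flatThreshold_pos (hq i ▸ Fintype.card_pos)
  have hr0 : ∀ i, 0 ≤ θ i / flatThreshold (n i) (q i) m := fun i =>
    div_nonneg (hθ i).1 (ht i).le
  have hr : ∀ i, θ i / flatThreshold (n i) (q i) m ≤ 1 - ε := fun i =>
    (div_le_iff₀ (ht i)).2 (h i)
  have hlim : Tendsto (fun i => (1 - ε) ^ q i ^ m) atTop (nhds 0) :=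
    (tendsto_pow_atTop_nhds_zero_of_lt_one ((hr0 0).trans (hr 0)) (by linarith)).comp
      ((tendsto_pow_atTop (by omega)).comp hqtop)
  exact squeeze_zero (fun i => prContainsFlat_nonneg (hθ i).1 (hθ i).2)
    (fun i => (prContainsFlat_le (hq i) (hθ i).1 (hθ i).2).trans
      (pow_le_pow_left₀ (hr0 i) (hr i) _)) hlim

theorem tendsto_prContainsFlat_of_ge (hm : 1 ≤ m) (hmn : ∀ i, m < n i)
    (hq : ∀ i, Fintype.card (F i) = q i) (hn : Tendsto n atTop atTop)
    (hqtop : Tendsto q atTop atTop) {ε : ℝ} (hε : 0 < ε) (hθ : ∀ i, 0 ≤ θ i ∧ θ i ≤ 1)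
    (h : ∀ i, (1 + ε) * flatThreshold (n i) (q i) m ≤ θ i) :
    Tendsto (fun i => prContainsFlat (F i) (n i) m (θ i)) atTop (nhds 1) := by
  have hlim : Tendsto (fun i => ((q i : ℝ) ^ m) ^ (m + 1) * ((1 + ε)⁻¹) ^ q i ^ m +
      (3 : ℝ) ^ (((2 * m * m + m : ℕ) : ℝ) - n i / 3)) atTop (nhds 0) := by
    have h1 := (tendsto_pow_const_mul_const_pow_of_abs_lt_one (m + 1) (r := (1 + ε)⁻¹)
      (by rw [abs_of_pos (by positivity)]; exact inv_lt_one_of_one_lt₀ (by linarith))).comp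
      ((tendsto_pow_atTop (by omega : m ≠ 0)).comp hqtop)
    have h2 := h1.add (tendsto_rpow_sub_div_three hn ((2 * m * m + m : ℕ) : ℝ))
    rw [add_zero] at h2
    refine h2.congr fun i => ?_
    simp only [Function.comp_apply, Nat.cast_pow]
  refine tendsto_prContainsFlat_one hθ hlim ?_
  filter_upwards [hqtop.eventually_ge_atTop 3, hn.eventually_ge_atTop (3 * (2 * m * m + m))]
    with i hqi hni
  have ht : 0 < flatThreshold (n i) (q i) m := flatThreshold_pos (by omega)
  have hθ0 : 0 < θ i := (by positivity : (0 : ℝ) < _).trans_le (h i)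
  have hle : flatThreshold (n i) (q i) m ≤ θ i := by nlinarith [h i]
  have hs : flatThreshold (n i) (q i) m / θ i ≤ (1 + ε)⁻¹ := by
    rw [div_le_iff₀ hθ0, ← div_eq_inv_mul, le_div_iff₀ (by positivity), mul_comm]
    exact h i
  refine (one_sub_prContainsFlat_le (hq i) (hmn i) hni hθ0 (hθ i).2 hle).trans ?_
  rw [if_neg (by omega)]
  gcongr

end Limits

theorem stmt8 (n q : ℕ → ℕ) (F : ℕ → Type) [∀ i, Field (F i)] [∀ i, Fintype (F i)]
    (m : ℕ) (hm : 1 ≤ m) (hmn : ∀ i, m < n i)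
    (hq : ∀ i, Fintype.card (F i) = q i) (hqpp : ∀ i, IsPrimePow (q i))
    (hntop : Tendsto n atTop atTop) :
    (∀ θ : ℕ → ℝ, (∀ i, 0 ≤ θ i ∧ θ i ≤ 1) →
      (θ =o[atTop] (fun i =>
          (q i : ℝ) ^ (-(((n i : ℝ) * ((m : ℝ) + 1)) / (q i : ℝ) ^ m))) →
        Tendsto (fun i => prRandomSubset (Finset.univ : Finset (Fin (n i) → F i)) (θ i)
          (fun A => ∃ S : Set (Fin (n i) → F i), IsFlat (F i) m S ∧
            S ⊆ (A : Set (Fin (n i) → F i)))) atTop (nhds 0)) ∧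
      ((fun i => (q i : ℝ) ^ (-(((n i : ℝ) * ((m : ℝ) + 1)) / (q i : ℝ) ^ m)))
          =o[atTop] θ →
        Tendsto (fun i => prRandomSubset (Finset.univ : Finset (Fin (n i) → F i)) (θ i)
          (fun A => ∃ S : Set (Fin (n i) → F i), IsFlat (F i) m S ∧
            S ⊆ (A : Set (Fin (n i) → F i)))) atTop (nhds 1))) ∧
    (Tendsto q atTop atTop → ∀ ε : ℝ, 0 < ε → ∀ θ : ℕ → ℝ, (∀ i, 0 ≤ θ i ∧ θ i ≤ 1) →
      ((∀ i, θ i ≤ (1 - ε) * (q i : ℝ) ^ (-(((n i : ℝ) * ((m : ℝ) + 1)) / (q i : ℝ) ^ m))) →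
        Tendsto (fun i => prRandomSubset (Finset.univ : Finset (Fin (n i) → F i)) (θ i)
          (fun A => ∃ S : Set (Fin (n i) → F i), IsFlat (F i) m S ∧
            S ⊆ (A : Set (Fin (n i) → F i)))) atTop (nhds 0)) ∧
      ((∀ i, (1 + ε) * (q i : ℝ) ^ (-(((n i : ℝ) * ((m : ℝ) + 1)) / (q i : ℝ) ^ m)) ≤ θ i) →
        Tendsto (fun i => prRandomSubset (Finset.univ : Finset (Fin (n i) → F i)) (θ i)
          (fun A => ∃ S : Set (Fin (n i) → F i), IsFlat (F i) m S ∧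
            S ⊆ (A : Set (Fin (n i) → F i)))) atTop (nhds 1))) := by
  refine ⟨fun θ hθ => ⟨fun h => ?_, fun h => ?_⟩,
    fun hqtop ε hε θ hθ => ⟨fun h => ?_, fun h => ?_⟩⟩
  · exact tendsto_prContainsFlat_of_isLittleO hq hθ h
  · exact tendsto_prContainsFlat_of_isLittleO' hmn hq hntop hθ h
  · exact tendsto_prContainsFlat_of_le hm hq hqtop hε hθ h
  · exact tendsto_prContainsFlat_of_ge hm hmn hq hntop hqtop hε hθ h
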